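/- Let 0 < γ < 1, let a < b, c < d, and let u be six times continuously differentiable on [a, b] × [c, d]. For positive integers M_x, M_y set h_x = (b − a)/M_x, h_y = (d − c)/M_y, x_{l/2} = a + l h_x/2 (l = 0, …, 2M_x), y_{r/2} = c + r h_y/2 (r = 0, …, 2M_y), and let u_Q be the piecewise Lagrange quadratic interpolant of u on this tensor grid. Then there is a constant C > 0, depending only on u, γ, a, b, c, d, such that for all M_x, M_y ≥ 1 and all indices 1 ≤ i ≤ 2M_x − 1, 1 ≤ j ≤ 2M_y − 1, |∫_c^d ∫_a^b (u(x, y) − u_Q(x, y)) · ((x_{i/2} − x)² + (y_{j/2} − y)²)^{−γ/2} dx dy| ≤ C (h_x^4 (η_{i/2})^{−γ} + h_y^4 (η̃_{j/2})^{−γ} + h_x^{5−γ} + h_y^{5−γ}), where η_{i/2} = min{x_{i/2} − a, b − x_{i/2}} and η̃_{j/2} = min{y_{j/2} − c, d − y_{j/2}}. -/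

import Mathlib

open MeasureTheory

/-- The piecewise quadratic Lagrange basis function attached to the node
`a + l·h/2` of the grid with integer nodes `a + k·h` (`k = 0, …, M`) and
half-integer midpoints. For odd `l` it is the interior bump
`4(x − x_{(l−1)/2})(x_{(l+1)/2} − x)/h²` on its cell, and for even `l` it is the
usual quadratic nodal basis function supported on the two adjacent cells. -/
noncomputable def quadBasis (a h : ℝ) (l : ℕ) (x : ℝ) : ℝ :=
  if l % 2 = 1 then
    if a + ((l : ℝ) - 1) * h / 2 ≤ x ∧ x ≤ a + ((l : ℝ) + 1) * h / 2 then
      4 * (x - (a + ((l : ℝ) - 1) * h / 2)) * ((a + ((l : ℝ) + 1) * h / 2) - x) / h ^ 2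
    else 0
  else
    if a + ((l : ℝ) - 2) * h / 2 ≤ x ∧ x ≤ a + (l : ℝ) * h / 2 then
      (x - (a + ((l : ℝ) - 2) * h / 2)) *
        (2 * x - ((a + (l : ℝ) * h / 2) + (a + ((l : ℝ) - 2) * h / 2))) / h ^ 2
    else if a + (l : ℝ) * h / 2 ≤ x ∧ x ≤ a + ((l : ℝ) + 2) * h / 2 then
      ((a + ((l : ℝ) + 2) * h / 2) - x) *
        (((a + ((l : ℝ) + 2) * h / 2) + (a + (l : ℝ) * h / 2)) - 2 * x) / h ^ 2
    else 0

/-- The piecewise Lagrange quadratic interpolant of `u` on the tensor grid with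
nodes `(a + l·h_x/2, c + r·h_y/2)`, `l = 0, …, 2M_x`, `r = 0, …, 2M_y`. -/
noncomputable def quadInterp (a c hx hy : ℝ) (Mx My : ℕ) (u : ℝ → ℝ → ℝ)
    (x y : ℝ) : ℝ :=
  ∑ l ∈ Finset.range (2 * Mx + 1), ∑ r ∈ Finset.range (2 * My + 1),
    quadBasis a hx l x * quadBasis c hy r y *
      u (a + (l : ℝ) * hx / 2) (c + (r : ℝ) * hy / 2)

section Basis

variable {a h x : ℝ}

lemma quadBasis_abs_le_one (hh : 0 < h) (l : ℕ) (x : ℝ) : |quadBasis a h l x| ≤ 1 := by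
  have h2 : 0 < h ^ 2 := by positivity
  unfold quadBasis
  split_ifs with h0 h1 h1 h3
  · obtain ⟨h1, h3⟩ := h1
    rw [abs_le, le_div_iff₀ h2, div_le_iff₀ h2]
    constructor
    · nlinarith [mul_nonneg (sub_nonneg.2 h1) (sub_nonneg.2 h3)]
    · nlinarith [sq_nonneg (x - a - l * h / 2)]
  · simp
  · obtain ⟨h1, h3⟩ := h1
    rw [abs_le, le_div_iff₀ h2, div_le_iff₀ h2]
    obtain ⟨s, rfl⟩ : ∃ s, x = a + ((l : ℝ) - 2) * h / 2 + s :=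
      ⟨_, (add_sub_cancel _ _).symm⟩
    constructor
    · nlinarith [sq_nonneg (s - h / 4)]
    · nlinarith
  · obtain ⟨h1, h3⟩ := h3
    rw [abs_le, le_div_iff₀ h2, div_le_iff₀ h2]
    obtain ⟨s, rfl⟩ : ∃ s, x = a + ((l : ℝ) + 2) * h / 2 - s :=
      ⟨_, (sub_sub_cancel _ _).symm⟩
    constructor
    · nlinarith [sq_nonneg (s - h / 4)]
    · nlinarith
  · simp

lemma measurable_quadBasis (a h : ℝ) (l : ℕ) : Measurable (quadBasis a h l) := by
  have hs : ∀ p q : ℝ, MeasurableSet {x : ℝ | p ≤ x ∧ x ≤ q} := fun _ _ => measurableSet_Icc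
  unfold quadBasis
  split_ifs
  · exact Measurable.ite (hs _ _) (by fun_prop) measurable_const
  · exact Measurable.ite (hs _ _) (by fun_prop)
      (Measurable.ite (hs _ _) (by fun_prop) measurable_const)

lemma quadBasis_eq_zero_of_le (hh : 0 < h) {l m : ℕ} (hl : 2 * m + 2 < l)
    (hx : x ≤ a + m * h + h) : quadBasis a h l x = 0 := by
  have hl1 : 2 * (m : ℝ) + 3 ≤ l := by exact_mod_cast hl
  unfold quadBasis
  split_ifs with h0 h1 h1 h3
  · have : x = a + ((l : ℝ) - 1) * h / 2 := by nlinarith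
    simp [this]
  · rfl
  · have hl2 : 2 * (m : ℝ) + 4 ≤ l := by
      have : 2 * m + 4 ≤ l := by omega
      exact_mod_cast this
    have : x = a + ((l : ℝ) - 2) * h / 2 := by nlinarith
    simp [this]
  · nlinarith
  · rfl

lemma quadBasis_eq_zero_of_ge (hh : 0 < h) {l m : ℕ} (hl : l < 2 * m)
    (hx : a + m * h ≤ x) : quadBasis a h l x = 0 := by
  have hl1 : (l : ℝ) + 1 ≤ 2 * m := by exact_mod_cast hl
  unfold quadBasis
  split_ifs with h0 h1 h1 h3
  · have : x = a + ((l : ℝ) + 1) * h / 2 := by nlinarith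
    simp [this]
  · rfl
  · nlinarith
  · have hl2 : (l : ℝ) + 2 ≤ 2 * m := by
      have : l + 2 ≤ 2 * m := by omega
      exact_mod_cast this
    have : x = a + ((l : ℝ) + 2) * h / 2 := by nlinarith
    simp [this]
  · rfl

lemma quadBasis_left {m : ℕ} (h1 : a + m * h ≤ x) (h2 : x ≤ a + m * h + h) :
    quadBasis a h (2 * m) x = (a + m * h + h - x) * (2 * (a + m * h) + h - 2 * x) / h ^ 2 := by
  have hm : (((2 * m : ℕ) : ℝ)) = 2 * m := by push_cast; ring
  unfold quadBasis
  rw [if_neg (by omega), hm]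
  split_ifs with h3 h4
  · have : x = a + m * h := by nlinarith
    rw [this]; ring
  · ring
  · exact absurd ⟨by nlinarith, by nlinarith⟩ h4

lemma quadBasis_mid {m : ℕ} (h1 : a + m * h ≤ x) (h2 : x ≤ a + m * h + h) :
    quadBasis a h (2 * m + 1) x = 4 * (x - (a + m * h)) * (a + m * h + h - x) / h ^ 2 := by
  unfold quadBasis
  rw [if_pos (by omega)]
  push_cast
  rw [if_pos ⟨by linarith, by linarith⟩]
  ring

lemma quadBasis_right {m : ℕ} (h1 : a + m * h ≤ x) (h2 : x ≤ a + m * h + h) :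
    quadBasis a h (2 * m + 2) x = (x - (a + m * h)) * (2 * x - 2 * (a + m * h) - h) / h ^ 2 := by
  unfold quadBasis
  rw [if_neg (by omega)]
  push_cast
  rw [if_pos ⟨by linarith, by linarith⟩]
  ring

lemma sum_quadBasis_mul (hh : 0 < h) {m M : ℕ} (hm : m < M) (h1 : a + m * h ≤ x)
    (h2 : x ≤ a + m * h + h) (F : ℕ → ℝ → ℝ) (hF : ∀ l, F l 0 = 0) :
    ∑ l ∈ Finset.range (2 * M + 1), F l (quadBasis a h l x) =
      F (2 * m) (quadBasis a h (2 * m) x) + F (2 * m + 1) (quadBasis a h (2 * m + 1) x) +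
        F (2 * m + 2) (quadBasis a h (2 * m + 2) x) := by
  rw [← Finset.sum_subset (s₁ := {2 * m, 2 * m + 1, 2 * m + 2})]
  · rw [Finset.sum_insert (by simp), Finset.sum_insert (by simp), Finset.sum_singleton, add_assoc]
  · intro l hl
    simp only [Finset.mem_insert, Finset.mem_singleton] at hl
    rw [Finset.mem_range]
    omega
  · intro l _ hl
    simp only [Finset.mem_insert, Finset.mem_singleton] at hl
    rcases lt_or_ge l (2 * m) with h3 | h3
    · rw [quadBasis_eq_zero_of_ge hh h3 h1, hF]
    · rw [quadBasis_eq_zero_of_le hh (by omega) h2, hF]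

/-- The Lebesgue constant of piecewise quadratic interpolation is at most `3`. -/
lemma sum_abs_quadBasis_le (hh : 0 < h) {M : ℕ} (h1 : a ≤ x) (h2 : x ≤ a + M * h) (hM : 1 ≤ M) :
    ∑ l ∈ Finset.range (2 * M + 1), |quadBasis a h l x| ≤ 3 := by
  obtain ⟨m, hm, h3, h4⟩ : ∃ m : ℕ, m < M ∧ a + m * h ≤ x ∧ x ≤ a + m * h + h := by
    induction M, hM using Nat.le_induction with
    | base => exact ⟨0, one_pos, by simpa using h1, by simpa using h2⟩
    | succ M _ ih =>
      rcases le_total x (a + M * h) with h5 | h5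
      · obtain ⟨m, hm, h⟩ := ih h5
        exact ⟨m, by omega, h⟩
      · exact ⟨M, by omega, h5, by push_cast at h2; linarith⟩
  rw [sum_quadBasis_mul hh hm h3 h4 (fun _ t => |t|) (by simp)]
  linarith [quadBasis_abs_le_one (a := a) hh (2 * m) x,
    quadBasis_abs_le_one (a := a) hh (2 * m + 1) x, quadBasis_abs_le_one (a := a) hh (2 * m + 2) x]

end Basis

/-- The one-dimensional piecewise quadratic interpolant. -/
noncomputable def quadInterpLine (a h : ℝ) (M : ℕ) (f : ℝ → ℝ) (x : ℝ) : ℝ :=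
  ∑ l ∈ Finset.range (2 * M + 1), quadBasis a h l x * f (a + (l : ℝ) * h / 2)

lemma quadInterpLine_eq {a h x : ℝ} (hh : 0 < h) {m M : ℕ} (hm : m < M) (h1 : a + m * h ≤ x)
    (h2 : x ≤ a + m * h + h) (f : ℝ → ℝ) :
    quadInterpLine a h M f x =
      (a + m * h + h - x) * (2 * (a + m * h) + h - 2 * x) / h ^ 2 * f (a + m * h) +
        4 * (x - (a + m * h)) * (a + m * h + h - x) / h ^ 2 * f (a + m * h + h / 2) +
        (x - (a + m * h)) * (2 * x - 2 * (a + m * h) - h) / h ^ 2 * f (a + m * h + h) := by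
  unfold quadInterpLine
  rw [sum_quadBasis_mul hh hm h1 h2 (fun l t => t * f (a + (l : ℝ) * h / 2)) (by simp),
    quadBasis_left h1 h2, quadBasis_mid h1 h2, quadBasis_right h1 h2]
  have e0 : a + ((2 * m : ℕ) : ℝ) * h / 2 = a + m * h := by push_cast; ring
  have e1 : a + ((2 * m + 1 : ℕ) : ℝ) * h / 2 = a + m * h + h / 2 := by push_cast; ring
  have e2 : a + ((2 * m + 2 : ℕ) : ℝ) * h / 2 = a + m * h + h := by push_cast; ring
  rw [e0, e1, e2]

/-- Every base point of `[a, b]` carries a cubic polynomial with leading coefficient at most `N`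
that approximates `f` to fourth order to the right of the base point. -/
def HasCubicApprox (N a b : ℝ) (f : ℝ → ℝ) : Prop :=
  ∀ p ∈ Set.Icc a b, ∃ c₀ c₁ c₂ c₃ : ℝ, |c₃| ≤ N ∧ ∀ x ∈ Set.Icc p b,
    |f x - (c₀ + c₁ * (x - p) + c₂ * (x - p) ^ 2 + c₃ * (x - p) ^ 3)| ≤ N * (x - p) ^ 4

lemma HasCubicApprox.sum {ι : Type*} (s : Finset ι) {N L a b : ℝ} (hN : 0 ≤ N) {f : ι → ℝ → ℝ}
    (hf : ∀ i ∈ s, HasCubicApprox N a b (f i)) (w : ι → ℝ) (hw : ∑ i ∈ s, |w i| ≤ L) :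
    HasCubicApprox (L * N) a b (fun x => ∑ i ∈ s, w i * f i x) := by
  intro p hp
  have : ∀ i, ∃ c₀ c₁ c₂ c₃ : ℝ, i ∈ s → |c₃| ≤ N ∧ ∀ x ∈ Set.Icc p b,
      |f i x - (c₀ + c₁ * (x - p) + c₂ * (x - p) ^ 2 + c₃ * (x - p) ^ 3)| ≤ N * (x - p) ^ 4 := by
    intro i
    by_cases hi : i ∈ s
    · obtain ⟨c₀, c₁, c₂, c₃, h⟩ := hf i hi p hp
      exact ⟨c₀, c₁, c₂, c₃, fun _ => h⟩
    · exact ⟨0, 0, 0, 0, fun h => absurd h hi⟩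
  choose c₀ c₁ c₂ c₃ hc using this
  refine ⟨∑ i ∈ s, w i * c₀ i, ∑ i ∈ s, w i * c₁ i, ∑ i ∈ s, w i * c₂ i, ∑ i ∈ s, w i * c₃ i,
    ?_, fun x hx => ?_⟩
  · calc |∑ i ∈ s, w i * c₃ i| ≤ ∑ i ∈ s, |w i| * N := by
          refine (Finset.abs_sum_le_sum_abs _ _).trans (Finset.sum_le_sum fun i hi => ?_)
          rw [abs_mul]
          exact mul_le_mul_of_nonneg_left (hc i hi).1 (abs_nonneg _)
      _ ≤ L * N := by
          rw [← Finset.sum_mul]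
          exact mul_le_mul_of_nonneg_right hw hN
  · have h0 : 0 ≤ N * (x - p) ^ 4 := by positivity
    have : ∑ i ∈ s, w i * f i x - (∑ i ∈ s, w i * c₀ i + (∑ i ∈ s, w i * c₁ i) * (x - p) +
          (∑ i ∈ s, w i * c₂ i) * (x - p) ^ 2 + (∑ i ∈ s, w i * c₃ i) * (x - p) ^ 3) =
        ∑ i ∈ s, w i * (f i x - (c₀ i + c₁ i * (x - p) + c₂ i * (x - p) ^ 2 +
          c₃ i * (x - p) ^ 3)) := by
      simp only [Finset.sum_mul, ← Finset.sum_add_distrib, ← Finset.sum_sub_distrib]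
      exact Finset.sum_congr rfl fun i _ => by ring
    rw [this]
    calc |∑ i ∈ s, w i * (f i x - (c₀ i + c₁ i * (x - p) + c₂ i * (x - p) ^ 2 +
          c₃ i * (x - p) ^ 3))| ≤ ∑ i ∈ s, |w i| * (N * (x - p) ^ 4) := by
          refine (Finset.abs_sum_le_sum_abs _ _).trans (Finset.sum_le_sum fun i hi => ?_)
          rw [abs_mul]
          exact mul_le_mul_of_nonneg_left ((hc i hi).2 x hx) (abs_nonneg _)
      _ ≤ L * N * (x - p) ^ 4 := by
          rw [← Finset.sum_mul, mul_assoc]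
          exact mul_le_mul_of_nonneg_right hw h0

lemma hasCubicApprox_of_hasDerivWithinAt {N a b : ℝ} {f f₁ f₂ f₃ f₄ : ℝ → ℝ}
    (h0 : ∀ x ∈ Set.Icc a b, HasDerivWithinAt f (f₁ x) (Set.Icc a b) x)
    (h1 : ∀ x ∈ Set.Icc a b, HasDerivWithinAt f₁ (f₂ x) (Set.Icc a b) x)
    (h2 : ∀ x ∈ Set.Icc a b, HasDerivWithinAt f₂ (f₃ x) (Set.Icc a b) x)
    (h3 : ∀ x ∈ Set.Icc a b, HasDerivWithinAt f₃ (f₄ x) (Set.Icc a b) x)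
    (hb3 : ∀ x ∈ Set.Icc a b, |f₃ x| ≤ N) (hb4 : ∀ x ∈ Set.Icc a b, |f₄ x| ≤ N) :
    HasCubicApprox N a b f := by
  intro p hp
  have hN : 0 ≤ N := (abs_nonneg _).trans (hb3 p hp)
  refine ⟨f p, f₁ p, f₂ p / 2, f₃ p / 6, ?_, fun x hx => ?_⟩
  · rw [abs_div, abs_of_pos (by norm_num : (0 : ℝ) < 6)]
    linarith [hb3 p hp, abs_nonneg (f₃ p)]
  have hxp : 0 ≤ x - p := sub_nonneg.2 hx.1
  have hsub : Set.Icc p x ⊆ Set.Icc a b := Set.Icc_subset_Icc hp.1 hx.2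
  have key : ∀ (g g' : ℝ → ℝ) (B : ℝ), g p = 0 →
      (∀ t ∈ Set.Icc p x, HasDerivWithinAt g (g' t) (Set.Icc p x) t) →
      (∀ t ∈ Set.Icc p x, |g' t| ≤ B) → ∀ t ∈ Set.Icc p x, |g t| ≤ B * (x - p) := by
    intro g g' B hg hd hB t ht
    have := (convex_Icc p x).norm_image_sub_le_of_norm_hasDerivWithin_le hd hB
      (Set.left_mem_Icc.2 hx.1) ht
    rw [hg, sub_zero, Real.norm_eq_abs, Real.norm_eq_abs, abs_of_nonneg (sub_nonneg.2 ht.1)] at this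
    refine this.trans (mul_le_mul_of_nonneg_left (by linarith [ht.2]) ?_)
    exact (abs_nonneg _).trans (hB t ht)
  have hd : ∀ t, HasDerivWithinAt (fun t : ℝ => t - p) 1 (Set.Icc p x) t := fun t =>
    (hasDerivWithinAt_id _ _).sub_const p
  have e3 := key (fun t => f₃ t - f₃ p) f₄ N (by simp)
    (fun t ht => ((h3 t (hsub ht)).mono hsub).sub_const _) (fun t ht => hb4 t (hsub ht))
  have e2 := key (fun t => f₂ t - f₂ p - f₃ p * (t - p)) _ _ (by simp)
    (fun t ht => (((h2 t (hsub ht)).mono hsub).sub_const _).sub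
      (((hd t).const_mul (f₃ p)).congr_deriv (mul_one _))) e3
  have e1 := key (fun t => f₁ t - f₁ p - f₂ p * (t - p) - f₃ p / 2 * (t - p) ^ 2) _ _ (by simp)
    (fun t ht => (((((h1 t (hsub ht)).mono hsub).sub_const _).sub
      ((hd t).const_mul (f₂ p))).sub (((hd t).pow 2).const_mul (f₃ p / 2))).congr_deriv
        (by push_cast; ring)) e2
  have e0 := key (fun t => f t - f p - f₁ p * (t - p) - f₂ p / 2 * (t - p) ^ 2 -
      f₃ p / 6 * (t - p) ^ 3) _ _ (by simp)
    (fun t ht => ((((((h0 t (hsub ht)).mono hsub).sub_const _).sub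
      ((hd t).const_mul (f₁ p))).sub (((hd t).pow 2).const_mul (f₂ p / 2))).sub
        (((hd t).pow 3).const_mul (f₃ p / 6))).congr_deriv (by push_cast; ring)) e1
  have := e0 x (Set.right_mem_Icc.2 hx.1)
  convert this using 1
  · congr 1; ring
  · ring

/-- Interpolation error on a single cell, tested against a kernel of oscillation at most `ω`. -/
lemma abs_integral_cell_le {p h N m ω c₀ c₁ c₂ c₃ : ℝ} (hh : 0 < h) (hN : 0 ≤ N)
    {f Q k : ℝ → ℝ} (hfc : ContinuousOn f (Set.Icc p (p + h)))
    (hkc : ContinuousOn k (Set.Icc p (p + h))) (hc : |c₃| ≤ N)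
    (hf : ∀ x ∈ Set.Icc p (p + h),
      |f x - (c₀ + c₁ * (x - p) + c₂ * (x - p) ^ 2 + c₃ * (x - p) ^ 3)| ≤ N * (x - p) ^ 4)
    (hQ : ∀ x ∈ Set.Icc p (p + h), Q x =
      (p + h - x) * (2 * p + h - 2 * x) / h ^ 2 * f p +
        4 * (x - p) * (p + h - x) / h ^ 2 * f (p + h / 2) +
        (x - p) * (2 * x - 2 * p - h) / h ^ 2 * f (p + h))
    (hkm : ∀ x ∈ Set.Icc p (p + h), |k x| ≤ m)
    (hkω : ∀ x ∈ Set.Icc p (p + h), |k x - k p| ≤ ω) :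
    IntervalIntegrable (fun x => (f x - Q x) * k x) volume p (p + h) ∧
    |∫ x in p..(p + h), (f x - Q x) * k x| ≤ 4 * N * h ^ 5 * m + N * h ^ 4 * ω := by
  have hph : p ≤ p + h := by linarith
  set w : ℝ → ℝ := fun x => (x - p) * (x - p - h / 2) * (x - p - h) with hw
  have hcont : ContinuousOn (fun x => (f x - Q x) * k x) (Set.Icc p (p + h)) := by
    refine (hfc.sub ?_).mul hkc
    refine ContinuousOn.congr ?_ hQ
    fun_prop
  have hint : IntervalIntegrable (fun x => (f x - Q x) * k x) volume p (p + h) := by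
    apply ContinuousOn.intervalIntegrable
    rwa [Set.uIcc_of_le hph]
  refine ⟨hint, ?_⟩
  have hwint : ∫ x in p..(p + h), w x = 0 := by
    rw [intervalIntegral.integral_eq_sub_of_hasDerivAt
      (f := fun x => (x - p) ^ 2 * (x - p - h) ^ 2 / 4)]
    · ring
    · intro x _
      have h1 := (hasDerivAt_id x).sub_const p
      have h2 := h1.sub_const h
      refine (((h1.pow 2).mul (h2.pow 2)).div_const 4).congr_deriv ?_
      simp only [hw, id, Pi.pow_apply]
      push_cast
      ring
    · exact Continuous.intervalIntegrable (by fun_prop) _ _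
  have hsplit : ∫ x in p..(p + h), (f x - Q x) * k x =
      ∫ x in p..(p + h), ((f x - Q x) * k x - c₃ * k p * w x) := by
    rw [intervalIntegral.integral_sub hint
      (Continuous.intervalIntegrable (by fun_prop) _ _), intervalIntegral.integral_const_mul, hwint]
    ring
  rw [hsplit]
  have hbound : ∀ x ∈ Set.uIoc p (p + h),
      ‖(f x - Q x) * k x - c₃ * k p * w x‖ ≤ 4 * N * h ^ 4 * m + N * h ^ 3 * ω := by
    intro x hx
    rw [Set.uIoc_of_le hph] at hx
    have hx' : x ∈ Set.Icc p (p + h) := ⟨hx.1.le, hx.2⟩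
    have r0 : f p = c₀ := by
      have := hf p ⟨le_rfl, hph⟩
      simp only [sub_self, ne_eq, OfNat.ofNat_ne_zero, not_false_eq_true, zero_pow, mul_zero,
        add_zero, abs_nonpos_iff] at this
      linarith
    have hR : ∀ t ∈ Set.Icc p (p + h), ∃ r, |r| ≤ N * h ^ 4 ∧
        f t = c₀ + c₁ * (t - p) + c₂ * (t - p) ^ 2 + c₃ * (t - p) ^ 3 + r := by
      intro t ht
      refine ⟨_, (hf t ht).trans ?_, by ring⟩
      have : 0 ≤ t - p := sub_nonneg.2 ht.1
      gcongr
      linarith [ht.2]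
    obtain ⟨r, hr, e⟩ := hR x hx'
    obtain ⟨r1, hr1, e1⟩ := hR (p + h / 2) ⟨by linarith, by linarith⟩
    obtain ⟨r2, hr2, e2⟩ := hR (p + h) ⟨hph, le_rfl⟩
    obtain ⟨s, hs⟩ : ∃ s, s = (x - p) / h := ⟨_, rfl⟩
    have hxs : x = p + s * h := by rw [hs]; field_simp; ring
    have hs0 : 0 ≤ s := by rw [hs]; exact div_nonneg (by linarith [hx.1]) hh.le
    have hs1 : s ≤ 1 := by rw [hs, div_le_one hh]; linarith [hx.2]
    have hid : f x - Q x = c₃ * w x + (r - 4 * s * (1 - s) * r1 - s * (2 * s - 1) * r2) := by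
      rw [hQ x hx', r0, e, e1, e2, hw]
      simp only
      rw [hxs]
      field_simp
      ring
    have hρ : |r - 4 * s * (1 - s) * r1 - s * (2 * s - 1) * r2| ≤ 4 * (N * h ^ 4) := by
      have b1 : |4 * s * (1 - s)| ≤ 1 := by
        rw [abs_le]; constructor <;> nlinarith [sq_nonneg (s - 1 / 2)]
      have b2 : |s * (2 * s - 1)| ≤ 1 := by
        rw [abs_le]; constructor <;> nlinarith [sq_nonneg (s - 1 / 4)]
      have hNh : 0 ≤ N * h ^ 4 := by positivity
      have m1 := mul_le_mul b1 hr1 (abs_nonneg _) zero_le_one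
      have m2 := mul_le_mul b2 hr2 (abs_nonneg _) zero_le_one
      rw [← abs_mul] at m1 m2
      have t1 := abs_sub (r - 4 * s * (1 - s) * r1) (s * (2 * s - 1) * r2)
      have t2 := abs_sub r (4 * s * (1 - s) * r1)
      linarith
    have hwb : |w x| ≤ h ^ 3 := by
      have : w x = s * (s - 1 / 2) * (s - 1) * h ^ 3 := by simp only [hw, hxs]; ring
      rw [this, abs_mul, abs_of_pos (by positivity : 0 < h ^ 3)]
      refine mul_le_of_le_one_left (by positivity) ?_
      rw [abs_mul, abs_mul]
      have a1 : |s| ≤ 1 := abs_le.2 ⟨by linarith, by linarith⟩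
      have a2 : |s - 1 / 2| ≤ 1 := abs_le.2 ⟨by linarith, by linarith⟩
      have a3 : |s - 1| ≤ 1 := abs_le.2 ⟨by linarith, by linarith⟩
      exact mul_le_one₀ (mul_le_one₀ a1 (abs_nonneg _) a2) (abs_nonneg _) a3
    have : (f x - Q x) * k x - c₃ * k p * w x =
        (r - 4 * s * (1 - s) * r1 - s * (2 * s - 1) * r2) * k x + c₃ * w x * (k x - k p) := by
      rw [hid]; ring
    rw [this, Real.norm_eq_abs]
    refine (abs_add_le _ _).trans ?_
    rw [abs_mul, abs_mul, abs_mul]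
    have q1 := mul_le_mul hρ (hkm x hx') (abs_nonneg _) (by positivity)
    have q2 := mul_le_mul (mul_le_mul hc hwb (abs_nonneg _) hN) (hkω x hx') (abs_nonneg _)
      (by positivity)
    linarith
  refine (intervalIntegral.norm_integral_le_of_norm_le_const hbound).trans (le_of_eq ?_)
  rw [add_sub_cancel_left, abs_of_pos hh]
  ring

/-- The one-dimensional interpolation error against a kernel whose oscillation is controlled by
the increments of `V` is of fourth order. -/
lemma abs_integral_sub_quadInterpLine_le {a b N m : ℝ} {M : ℕ} (hab : a < b) (hM : 1 ≤ M)
    (hN : 0 ≤ N) {f k V : ℝ → ℝ} (hfc : ContinuousOn f (Set.Icc a b))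
    (hf : HasCubicApprox N a b f) (hkc : ContinuousOn k (Set.Icc a b))
    (hkm : ∀ x ∈ Set.Icc a b, |k x| ≤ m)
    (hkV : ∀ x ∈ Set.Icc a b, ∀ y ∈ Set.Icc a b, x ≤ y → |k y - k x| ≤ V y - V x)
    (hV : V b - V a ≤ 2 * m) :
    |∫ x in a..b, (f x - quadInterpLine a ((b - a) / M) M f x) * k x| ≤
      (4 * (b - a) + 2) * N * ((b - a) / M) ^ 4 * m := by
  have hM0 : (0 : ℝ) < M := by exact_mod_cast hM
  obtain ⟨h, hh⟩ : ∃ h, h = (b - a) / M := ⟨_, rfl⟩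
  rw [← hh]
  have hpos : 0 < h := by rw [hh]; exact div_pos (by linarith) hM0
  have hMh : M * h = b - a := by rw [hh]; field_simp
  have hnode : ∀ n : ℕ, n ≤ M → a + n * h ∈ Set.Icc a b := by
    intro n hn
    have : (n : ℝ) ≤ M := by exact_mod_cast hn
    constructor <;> nlinarith [(Nat.cast_nonneg n : (0 : ℝ) ≤ n)]
  have hcell : ∀ n < M,
      IntervalIntegrable (fun x => (f x - quadInterpLine a h M f x) * k x) volume
        (a + n * h) (a + (n + 1 : ℕ) * h) ∧
      |∫ x in (a + n * h)..(a + (n + 1 : ℕ) * h), (f x - quadInterpLine a h M f x) * k x| ≤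
        4 * N * h ^ 5 * m + N * h ^ 4 * (V (a + (n + 1 : ℕ) * h) - V (a + n * h)) := by
    intro n hn
    have hr : a + (n + 1 : ℕ) * h = a + n * h + h := by push_cast; ring
    have hp := hnode n hn.le
    have hp' := hnode (n + 1) hn
    rw [hr] at hp' ⊢
    have hsub : Set.Icc (a + n * h) (a + n * h + h) ⊆ Set.Icc a b :=
      Set.Icc_subset_Icc hp.1 hp'.2
    obtain ⟨c₀, c₁, c₂, c₃, hc, hfx⟩ := hf _ hp
    refine abs_integral_cell_le hpos hN (hfc.mono hsub) (hkc.mono hsub) hc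
      (fun x hx => hfx x ⟨hx.1, (hsub hx).2⟩)
      (fun x hx => quadInterpLine_eq hpos hn hx.1 hx.2 f) (fun x hx => hkm x (hsub hx))
      (fun x hx => (hkV _ hp x (hsub hx) hx.1).trans ?_)
    have := (abs_nonneg _).trans (hkV x (hsub hx) _ hp' hx.2)
    linarith
  have hsum := intervalIntegral.sum_integral_adjacent_intervals
    (a := fun n : ℕ => a + n * h) (fun n hn => (hcell n hn).1)
  simp only [Nat.cast_zero, zero_mul, add_zero, hMh, add_sub_cancel] at hsum
  rw [← hsum]
  calc _ ≤ ∑ n ∈ Finset.range M, (4 * N * h ^ 5 * m +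
          N * h ^ 4 * (V (a + (n + 1 : ℕ) * h) - V (a + n * h))) :=
        (Finset.abs_sum_le_sum_abs _ _).trans
          (Finset.sum_le_sum fun n hn => (hcell n (Finset.mem_range.1 hn)).2)
    _ = 4 * N * h ^ 4 * m * (M * h) + N * h ^ 4 * (V b - V a) := by
        rw [Finset.sum_add_distrib, ← Finset.mul_sum (Finset.range M) _ (N * h ^ 4),
          Finset.sum_range_sub (fun n : ℕ => V (a + n * h))]
        simp only [Finset.sum_const, Finset.card_range, nsmul_eq_mul, Nat.cast_zero, zero_mul,
          add_zero, hMh, add_sub_cancel]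
        rw [← hMh]
        ring
    _ ≤ 4 * N * h ^ 4 * m * (b - a) + N * h ^ 4 * (2 * m) := by
        rw [hMh]
        gcongr
    _ = _ := by ring

lemma cauchyKernel_le {γ w t : ℝ} (hγ : 0 < γ) (ht : t ≠ 0) :
    (w ^ 2 + t ^ 2) ^ (-γ / 2) ≤ |t| ^ (-γ) := by
  have ht2 : 0 < t ^ 2 := by positivity
  calc (w ^ 2 + t ^ 2) ^ (-γ / 2) ≤ (t ^ 2) ^ (-γ / 2) :=
        Real.rpow_le_rpow_of_nonpos ht2 (by nlinarith [sq_nonneg w]) (by linarith)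
    _ = |t| ^ (-γ) := by
        rw [← sq_abs, ← Real.rpow_natCast, ← Real.rpow_mul (abs_nonneg t)]
        congr 1
        push_cast
        ring

lemma cauchyKernel_antitone {γ w w' t : ℝ} (hγ : 0 < γ) (ht : t ≠ 0) (h : w ^ 2 ≤ w' ^ 2) :
    (w' ^ 2 + t ^ 2) ^ (-γ / 2) ≤ (w ^ 2 + t ^ 2) ^ (-γ / 2) :=
  Real.rpow_le_rpow_of_nonpos (by positivity) (by linarith) (by linarith)

/-- Along a line off the singularity, the interpolation error tested against the Cauchy kernel is
of fourth order, with the maximum of the kernel as a factor. -/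
lemma abs_integral_line_le {a b N γ z t : ℝ} {M : ℕ} (hab : a < b) (hM : 1 ≤ M)
    (hN : 0 ≤ N) (hγ : 0 < γ) (ht : t ≠ 0) {f : ℝ → ℝ} (hfc : ContinuousOn f (Set.Icc a b))
    (hf : HasCubicApprox N a b f) :
    |∫ x in a..b, (f x - quadInterpLine a ((b - a) / M) M f x) *
        ((z - x) ^ 2 + t ^ 2) ^ (-γ / 2)| ≤
      (4 * (b - a) + 2) * N * ((b - a) / M) ^ 4 * |t| ^ (-γ) := by
  set k : ℝ → ℝ := fun x => ((z - x) ^ 2 + t ^ 2) ^ (-γ / 2) with hk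
  have hk0 : ∀ x, 0 ≤ k x := fun x => Real.rpow_nonneg (by positivity) _
  have hkm : ∀ x, k x ≤ |t| ^ (-γ) := fun x => cauchyKernel_le hγ ht
  have hkz : ∀ x, k x ≤ k z := fun x => cauchyKernel_antitone hγ ht (by nlinarith [sq_nonneg (z - x)])
  have hkc : Continuous k :=
    Continuous.rpow_const (by fun_prop) fun x => Or.inl (by positivity)
  refine abs_integral_sub_quadInterpLine_le (k := k)
    (V := fun x => if x ≤ z then k x - k z else k z - k x) hab hM hN hfc hf hkc.continuousOn
    (fun x _ => by rw [abs_of_nonneg (hk0 x)]; exact hkm x) ?_ ?_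
  · intro x _ y _ hxy
    split_ifs with h1 h2 h2
    · have : k x ≤ k y := cauchyKernel_antitone hγ ht (by nlinarith)
      rw [abs_of_nonneg (by linarith)]
      linarith
    · linarith
    · rw [abs_le]
      constructor <;> linarith [hkz x, hkz y]
    · have : k y ≤ k x := cauchyKernel_antitone hγ ht (by nlinarith)
      rw [abs_of_nonpos (by linarith)]
      linarith
  · split_ifs <;> linarith [hk0 a, hk0 b, hkz a, hkz b, hkm z]

/-- A partial derivative of a function on a rectangle, keeping track of smoothness. -/
lemma exists_hasDerivWithinAt_fst {a b c d : ℝ} (hab : a < b) (hcd : c < d)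
    {m n : WithTop ℕ∞} (hmn : m + 1 ≤ n) {U : ℝ × ℝ → ℝ}
    (hU : ContDiffOn ℝ n U (Set.Icc a b ×ˢ Set.Icc c d)) :
    ∃ V : ℝ × ℝ → ℝ, ContDiffOn ℝ m V (Set.Icc a b ×ˢ Set.Icc c d) ∧
      ∀ y ∈ Set.Icc c d, ∀ x ∈ Set.Icc a b,
        HasDerivWithinAt (fun s => U (s, y)) (V (x, y)) (Set.Icc a b) x := by
  have hS : UniqueDiffOn ℝ (Set.Icc a b ×ˢ Set.Icc c d) :=
    (uniqueDiffOn_Icc hab).prod (uniqueDiffOn_Icc hcd)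
  refine ⟨fun z => fderivWithin ℝ U (Set.Icc a b ×ˢ Set.Icc c d) z (1, 0),
    (hU.fderivWithin hS hmn).clm_apply contDiffOn_const, fun y hy x hx => ?_⟩
  have hn : n ≠ 0 := by
    rintro rfl
    simp at hmn
  have h1 := ((hU (x, y) ⟨hx, hy⟩).differentiableWithinAt hn).hasFDerivWithinAt
  have h2 : Set.MapsTo (fun s : ℝ => (s, y)) (Set.Icc a b) (Set.Icc a b ×ˢ Set.Icc c d) :=
    fun s hs => ⟨hs, hy⟩
  exact h1.comp_hasDerivWithinAt x
    ((hasDerivWithinAt_id x _).prodMk (hasDerivWithinAt_const x _ y)) h2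

lemma exists_hasCubicApprox_fst {a b c d : ℝ} (hab : a < b) (hcd : c < d) {U : ℝ × ℝ → ℝ}
    (hU : ContDiffOn ℝ 4 U (Set.Icc a b ×ˢ Set.Icc c d)) :
    ∃ N : ℝ, 0 ≤ N ∧ ∀ y ∈ Set.Icc c d, HasCubicApprox N a b (fun x => U (x, y)) := by
  obtain ⟨V₁, hV₁, h₁⟩ := exists_hasDerivWithinAt_fst (m := 3) hab hcd (by norm_num) hU
  obtain ⟨V₂, hV₂, h₂⟩ := exists_hasDerivWithinAt_fst (m := 2) hab hcd (by norm_num) hV₁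
  obtain ⟨V₃, hV₃, h₃⟩ := exists_hasDerivWithinAt_fst (m := 1) hab hcd (by norm_num) hV₂
  obtain ⟨V₄, hV₄, h₄⟩ := exists_hasDerivWithinAt_fst (m := 0) hab hcd (by norm_num) hV₃
  have hK : IsCompact (Set.Icc a b ×ˢ Set.Icc c d) := isCompact_Icc.prod isCompact_Icc
  obtain ⟨N₃, hN₃⟩ := hK.exists_bound_of_continuousOn hV₃.continuousOn
  obtain ⟨N₄, hN₄⟩ := hK.exists_bound_of_continuousOn hV₄.continuousOn
  refine ⟨max 0 (max N₃ N₄), le_max_left _ _, fun y hy => ?_⟩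
  exact hasCubicApprox_of_hasDerivWithinAt (h₁ y hy) (h₂ y hy) (h₃ y hy) (h₄ y hy)
    (fun x hx => (hN₃ (x, y) ⟨hx, hy⟩).trans ((le_max_left _ _).trans (le_max_right _ _)))
    (fun x hx => (hN₄ (x, y) ⟨hx, hy⟩).trans ((le_max_right _ _).trans (le_max_right _ _)))

lemma intervalIntegrable_abs_rpow_neg {γ : ℝ} (hγ1 : γ < 1) (p q : ℝ) :
    IntervalIntegrable (fun s : ℝ => |s| ^ (-γ)) volume p q := by
  have pos : ∀ L : ℝ, 0 ≤ L → IntervalIntegrable (fun s : ℝ => |s| ^ (-γ)) volume 0 L := by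
    intro L hL
    refine (intervalIntegral.intervalIntegrable_rpow' (r := -γ) (by linarith)).congr fun s hs => ?_
    rw [Set.uIoc_of_le hL] at hs
    rw [abs_of_pos hs.1]
  have all : ∀ L : ℝ, IntervalIntegrable (fun s : ℝ => |s| ^ (-γ)) volume 0 L := by
    intro L
    rcases le_total 0 L with hL | hL
    · exact pos L hL
    · rw [IntervalIntegrable.iff_comp_neg, neg_zero]
      simpa only [abs_neg] using pos (-L) (by linarith)
  exact (all p).symm.trans (all q)

lemma integrableOn_abs_sub_rpow_neg {γ : ℝ} (hγ1 : γ < 1) {c d : ℝ} (hcd : c ≤ d) (z : ℝ) :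
    IntegrableOn (fun y : ℝ => |z - y| ^ (-γ)) (Set.Ioc c d) := by
  rw [← intervalIntegrable_iff_integrableOn_Ioc_of_le hcd]
  have := (intervalIntegrable_abs_rpow_neg hγ1 (z - c) (z - d)).comp_sub_left z
  simpa using this

lemma setIntegral_abs_sub_rpow_neg_le {γ : ℝ} (hγ1 : γ < 1) {c d z : ℝ} (hz : z ∈ Set.Icc c d) :
    ∫ y in Set.Ioc c d, |z - y| ^ (-γ) ≤ ∫ s in Set.Ioc (-(d - c)) (d - c), |s| ^ (-γ) := by
  have hcd : c ≤ d := hz.1.trans hz.2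
  rw [← intervalIntegral.integral_of_le hcd,
    intervalIntegral.integral_comp_sub_left (fun s => |s| ^ (-γ)) z,
    intervalIntegral.integral_of_le (by linarith)]
  refine setIntegral_mono_set ?_ ?_ ?_
  · rw [← intervalIntegrable_iff_integrableOn_Ioc_of_le (by linarith)]
    exact intervalIntegrable_abs_rpow_neg hγ1 _ _
  · exact Filter.Eventually.of_forall fun s => Real.rpow_nonneg (abs_nonneg s) _
  · exact (Set.Ioc_subset_Ioc (by linarith [hz.1]) (by linarith [hz.2])).eventuallyLE

section Plane

variable {a b c d γ : ℝ}

lemma ae_restrict_ne (s : Set ℝ) (z : ℝ) : ∀ᵐ y ∂(volume.restrict s), y ≠ z :=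
  ae_restrict_of_ae (by simp [ae_iff])

lemma integrable_cauchyKernel (hγ : 0 < γ) (hγ1 : γ < 1) (hcd : c ≤ d) (p q : ℝ) :
    Integrable (fun z : ℝ × ℝ => ((p - z.1) ^ 2 + (q - z.2) ^ 2) ^ (-γ / 2))
      ((volume.restrict (Set.Ioc a b)).prod (volume.restrict (Set.Ioc c d))) := by
  have hg : Integrable (fun z : ℝ × ℝ => |q - z.2| ^ (-γ))
      ((volume.restrict (Set.Ioc a b)).prod (volume.restrict (Set.Ioc c d))) :=
    Integrable.comp_snd (f := fun y : ℝ => |q - y| ^ (-γ))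
      (integrableOn_abs_sub_rpow_neg hγ1 hcd q) _
  refine hg.mono' ?_ ?_
  · exact Measurable.aestronglyMeasurable (by fun_prop)
  · filter_upwards [Measure.quasiMeasurePreserving_snd.ae (ae_restrict_ne (Set.Ioc c d) q)]
      with z hz
    rw [Real.norm_of_nonneg (Real.rpow_nonneg (by positivity) _)]
    exact cauchyKernel_le hγ (sub_ne_zero.2 (Ne.symm hz))

lemma memLp_top_mul {α : Type*} [MeasurableSpace α] {μ : Measure α} {f g : α → ℝ}
    (hf : MemLp f ⊤ μ) (hg : MemLp g ⊤ μ) : MemLp (fun x => f x * g x) ⊤ μ :=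
  hg.mul' hf

lemma memLp_top_quadBasis {α : Type*} [MeasurableSpace α] {μ : Measure α} {h : ℝ} (hh : 0 < h)
    (l : ℕ) {g : α → ℝ} (hg : Measurable g) : MemLp (fun x => quadBasis a h l (g x)) ⊤ μ :=
  memLp_top_of_bound ((measurable_quadBasis a h l).comp hg).aestronglyMeasurable 1
    (Filter.Eventually.of_forall fun _ => quadBasis_abs_le_one hh l _)

lemma quadInterp_eq_quadInterpLine (hx hy : ℝ) (Mx My : ℕ) (u : ℝ → ℝ → ℝ) (x y : ℝ) :
    quadInterp a c hx hy Mx My u x y =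
      quadInterpLine c hy My (fun t => quadInterpLine a hx Mx (fun s => u s t) x) y := by
  unfold quadInterp quadInterpLine
  rw [Finset.sum_comm]
  refine Finset.sum_congr rfl fun r _ => ?_
  rw [Finset.mul_sum]
  exact Finset.sum_congr rfl fun l _ => by ring

lemma grid_mem_Icc (hab : a ≤ b) {M l : ℕ} (hM : 1 ≤ M) (hl : l ≤ 2 * M) :
    a + (l : ℝ) * ((b - a) / M) / 2 ∈ Set.Icc a b := by
  have hM0 : (0 : ℝ) < M := by exact_mod_cast hM
  have hl' : (l : ℝ) ≤ 2 * M := by exact_mod_cast hl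
  have h0 : 0 ≤ (b - a) / M := div_nonneg (by linarith) hM0.le
  have h1 : M * ((b - a) / M) = b - a := by field_simp
  constructor <;> nlinarith [(Nat.cast_nonneg l : (0 : ℝ) ≤ l)]

/-- The interpolation error against the Cauchy kernel is of fourth order in both mesh widths. -/
lemma abs_integral_sub_quadInterp_le (hγ : 0 < γ) (hγ1 : γ < 1) (hab : a < b) (hcd : c < d)
    {u : ℝ → ℝ → ℝ} (hu : ContinuousOn (Function.uncurry u) (Set.Icc a b ×ˢ Set.Icc c d))
    {N N' : ℝ} (hN : 0 ≤ N) (hN' : 0 ≤ N')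
    (h₁ : ∀ y ∈ Set.Icc c d, HasCubicApprox N a b (fun x => u x y))
    (h₂ : ∀ x ∈ Set.Icc a b, HasCubicApprox N' c d (fun y => u x y))
    {Mx My : ℕ} (hMx : 1 ≤ Mx) (hMy : 1 ≤ My) {p q : ℝ} (hp : p ∈ Set.Icc a b)
    (hq : q ∈ Set.Icc c d) :
    |∫ y in c..d, ∫ x in a..b,
        (u x y - quadInterp a c ((b - a) / Mx) ((d - c) / My) Mx My u x y) *
          ((p - x) ^ 2 + (q - y) ^ 2) ^ (-γ / 2)| ≤
      (4 * (b - a) + 2) * N * ((b - a) / Mx) ^ 4 *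
          (∫ s in Set.Ioc (-(d - c)) (d - c), |s| ^ (-γ)) +
        (4 * (d - c) + 2) * (3 * N') * ((d - c) / My) ^ 4 *
          (∫ s in Set.Ioc (-(b - a)) (b - a), |s| ^ (-γ)) := by
  obtain ⟨hx, hxd⟩ : ∃ h, h = (b - a) / Mx := ⟨_, rfl⟩
  obtain ⟨hy, hyd⟩ : ∃ h, h = (d - c) / My := ⟨_, rfl⟩
  have hMx0 : (0 : ℝ) < Mx := by exact_mod_cast hMx
  have hMy0 : (0 : ℝ) < My := by exact_mod_cast hMy
  have hx0 : 0 < hx := by rw [hxd]; exact div_pos (by linarith) hMx0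
  have hy0 : 0 < hy := by rw [hyd]; exact div_pos (by linarith) hMy0
  have hMhx : Mx * hx = b - a := by rw [hxd]; field_simp
  have hnode : ∀ l ∈ Finset.range (2 * Mx + 1), a + (l : ℝ) * hx / 2 ∈ Set.Icc a b := by
    intro l hl
    rw [hxd]
    exact grid_mem_Icc hab.le hMx (by rw [Finset.mem_range] at hl; omega)
  have hu₁ : ∀ y ∈ Set.Icc c d, ContinuousOn (fun x => u x y) (Set.Icc a b) := fun y hy =>
    hu.comp (f := fun x => (x, y)) (by fun_prop) fun x hx => ⟨hx, hy⟩
  have hu₂ : ∀ x ∈ Set.Icc a b, ContinuousOn (fun y => u x y) (Set.Icc c d) := fun x hx =>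
    hu.comp (f := fun y => (x, y)) (by fun_prop) fun y hy => ⟨hx, hy⟩
  rw [← hxd, ← hyd]
  set μ := (volume : Measure ℝ).restrict (Set.Ioc a b) with hμ
  set ν := (volume : Measure ℝ).restrict (Set.Ioc c d) with hν
  set K : ℝ × ℝ → ℝ := fun z => ((p - z.1) ^ 2 + (q - z.2) ^ 2) ^ (-γ / 2) with hK
  set A : ℝ × ℝ → ℝ := fun z => u z.1 z.2 - quadInterpLine a hx Mx (fun s => u s z.2) z.1 with hA
  set B : ℝ × ℝ → ℝ := fun z => quadInterpLine a hx Mx (fun s => u s z.2) z.1 -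
    quadInterpLine c hy My (fun t => quadInterpLine a hx Mx (fun s => u s t) z.1) z.2 with hB
  have hKint : Integrable K (μ.prod ν) := integrable_cauchyKernel hγ hγ1 hcd.le p q
  have hu_mem : MemLp (fun z : ℝ × ℝ => u z.1 z.2) ⊤ (μ.prod ν) := by
    have hsub : Set.Ioc a b ×ˢ Set.Ioc c d ⊆ Set.Icc a b ×ˢ Set.Icc c d :=
      Set.prod_mono Set.Ioc_subset_Icc_self Set.Ioc_subset_Icc_self
    obtain ⟨D, hD⟩ := (isCompact_Icc.prod isCompact_Icc).exists_bound_of_continuousOn hu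
    have hm : MeasurableSet (Set.Ioc a b ×ˢ Set.Ioc c d) := measurableSet_Ioc.prod measurableSet_Ioc
    rw [hμ, hν, Measure.prod_restrict]
    refine memLp_top_of_bound ((hu.mono hsub).aestronglyMeasurable hm) D ?_
    exact (ae_restrict_iff' hm).2 (Filter.Eventually.of_forall fun z hz => hD z (hsub hz))
  have hul_mem : ∀ l ∈ Finset.range (2 * Mx + 1),
      MemLp (fun z : ℝ × ℝ => u (a + (l : ℝ) * hx / 2) z.2) ⊤ (μ.prod ν) := by
    intro l hl
    have hc := hu₂ _ (hnode l hl)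
    obtain ⟨D, hD⟩ := isCompact_Icc.exists_bound_of_continuousOn hc
    refine memLp_top_of_bound
      ((hc.mono Set.Ioc_subset_Icc_self).aestronglyMeasurable measurableSet_Ioc).comp_snd D ?_
    exact Measure.quasiMeasurePreserving_snd.ae ((ae_restrict_iff' measurableSet_Ioc).2
      (Filter.Eventually.of_forall fun y hy => hD y (Set.Ioc_subset_Icc_self hy)))
  have hline : MemLp (fun z : ℝ × ℝ => quadInterpLine a hx Mx (fun s => u s z.2) z.1) ⊤
      (μ.prod ν) :=
    memLp_finsetSum _ fun l hl => memLp_top_mul (memLp_top_quadBasis hx0 l measurable_fst)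
      (hul_mem l hl)
  have hplane : MemLp (fun z : ℝ × ℝ =>
      quadInterpLine c hy My (fun t => quadInterpLine a hx Mx (fun s => u s t) z.1) z.2) ⊤
      (μ.prod ν) :=
    memLp_finsetSum _ fun r _ => memLp_top_mul (memLp_top_quadBasis hy0 r measurable_snd)
      (memLp_finsetSum _ fun l _ => memLp_top_mul (memLp_top_quadBasis hx0 l measurable_fst)
        (memLp_top_const _))
  have hAK : Integrable (fun z => A z * K z) (μ.prod ν) := hKint.mul_of_top_right (hu_mem.sub hline)
  have hBK : Integrable (fun z => B z * K z) (μ.prod ν) := hKint.mul_of_top_right (hline.sub hplane)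
  have hABK : Integrable (fun z => A z * K z + B z * K z) (μ.prod ν) := hAK.add hBK
  have hsplit : ∫ y in c..d, ∫ x in a..b, (u x y - quadInterp a c hx hy Mx My u x y) *
      ((p - x) ^ 2 + (q - y) ^ 2) ^ (-γ / 2) =
      (∫ y, ∫ x, A (x, y) * K (x, y) ∂μ ∂ν) + ∫ x, ∫ y, B (x, y) * K (x, y) ∂ν ∂μ := by
    rw [← integral_prod_symm _ hAK, ← integral_prod _ hBK, ← integral_add hAK hBK,
      integral_prod_symm _ hABK]
    simp only [intervalIntegral.integral_of_le hab.le, intervalIntegral.integral_of_le hcd.le,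
      quadInterp_eq_quadInterpLine, hA, hB, hK, ← hμ, ← hν]
    refine integral_congr_ae (Filter.Eventually.of_forall fun y =>
      integral_congr_ae (Filter.Eventually.of_forall fun x => ?_))
    simp only
    ring
  have hAbound : |∫ y, ∫ x, A (x, y) * K (x, y) ∂μ ∂ν| ≤
      (4 * (b - a) + 2) * N * hx ^ 4 * (∫ s in Set.Ioc (-(d - c)) (d - c), |s| ^ (-γ)) := by
    have h0 : 0 ≤ (4 * (b - a) + 2) * N * hx ^ 4 := by
      have : 0 < b - a := by linarith
      positivity
    refine (norm_integral_le_of_norm_le (μ := ν) (f := fun y => ∫ x, A (x, y) * K (x, y) ∂μ)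
      (g := fun y => (4 * (b - a) + 2) * N * hx ^ 4 * |q - y| ^ (-γ))
      ((integrableOn_abs_sub_rpow_neg hγ1 hcd.le q).const_mul _) ?_).trans ?_
    · filter_upwards [ae_restrict_ne (Set.Ioc c d) q, ae_restrict_mem measurableSet_Ioc]
        with y hyq hy
      have hy' := Set.Ioc_subset_Icc_self hy
      have := abs_integral_line_le (z := p) hab hMx hN hγ (sub_ne_zero.2 (Ne.symm hyq))
        (hu₁ y hy') (h₁ y hy')
      rwa [← hxd, intervalIntegral.integral_of_le hab.le] at this
    · rw [integral_const_mul]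
      exact mul_le_mul_of_nonneg_left (setIntegral_abs_sub_rpow_neg_le hγ1 hq) h0
  have hBbound : |∫ x, ∫ y, B (x, y) * K (x, y) ∂ν ∂μ| ≤
      (4 * (d - c) + 2) * (3 * N') * hy ^ 4 *
        (∫ s in Set.Ioc (-(b - a)) (b - a), |s| ^ (-γ)) := by
    have h0 : 0 ≤ (4 * (d - c) + 2) * (3 * N') * hy ^ 4 := by
      have : 0 < d - c := by linarith
      positivity
    refine (norm_integral_le_of_norm_le (μ := μ) (f := fun x => ∫ y, B (x, y) * K (x, y) ∂ν)
      (g := fun x => (4 * (d - c) + 2) * (3 * N') * hy ^ 4 * |p - x| ^ (-γ))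
      ((integrableOn_abs_sub_rpow_neg hγ1 hab.le p).const_mul _) ?_).trans ?_
    · filter_upwards [ae_restrict_ne (Set.Ioc a b) p, ae_restrict_mem measurableSet_Ioc]
        with x hxp hx'
      have hL : ∑ l ∈ Finset.range (2 * Mx + 1), |quadBasis a hx l x| ≤ 3 :=
        sum_abs_quadBasis_le hx0 hx'.1.le (by linarith [hx'.2]) hMx
      have hcub := HasCubicApprox.sum (Finset.range (2 * Mx + 1)) hN'
        (fun l hl => h₂ _ (hnode l hl)) (fun l => quadBasis a hx l x) hL
      have hcont : ContinuousOn (fun y => quadInterpLine a hx Mx (fun s => u s y) x)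
          (Set.Icc c d) :=
        continuousOn_finsetSum _ fun l hl => continuousOn_const.mul (hu₂ _ (hnode l hl))
      have := abs_integral_line_le (z := q) hcd hMy (by positivity) hγ
        (sub_ne_zero.2 (Ne.symm hxp)) hcont hcub
      rw [← hyd, intervalIntegral.integral_of_le hcd.le] at this
      simpa only [hB, hK, add_comm ((p - x) ^ 2), Real.norm_eq_abs] using this
    · rw [integral_const_mul]
      exact mul_le_mul_of_nonneg_left (setIntegral_abs_sub_rpow_neg_le hγ1 hp) h0
  rw [hsplit]
  exact (abs_add_le _ _).trans (add_le_add hAbound hBbound)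

lemma pow_le_rpow_mul_dist_endpoint (hγ : 0 < γ) (hab : a < b) {h : ℝ} (h0 : 0 ≤ h) {M i : ℕ}
    (hi : 1 ≤ i) (hiM : i ≤ 2 * M - 1) :
    h ^ 4 ≤ (b - a) ^ γ * (h ^ 4 * (min (a + (i : ℝ) * ((b - a) / M) / 2 - a)
      (b - (a + (i : ℝ) * ((b - a) / M) / 2))) ^ (-γ)) := by
  have hM0 : (0 : ℝ) < M := by
    have : 0 < M := by omega
    exact_mod_cast this
  have hba : 0 < b - a := sub_pos.2 hab
  have hi0 : (0 : ℝ) < i := by exact_mod_cast hi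
  have hi' : (i : ℝ) + 1 ≤ 2 * M := by
    have : i + 1 ≤ 2 * M := by omega
    exact_mod_cast this
  have hstep : 0 < (b - a) / M := div_pos hba hM0
  have hM1 : M * ((b - a) / M) = b - a := by field_simp
  set e := min (a + (i : ℝ) * ((b - a) / M) / 2 - a) (b - (a + (i : ℝ) * ((b - a) / M) / 2)) with he
  have e0 : 0 < e := lt_min (by rw [add_sub_cancel_left]; positivity) (by nlinarith)
  have e1 : e ≤ b - a := (min_le_right _ _).trans (by nlinarith)
  have : 1 ≤ (b - a) ^ γ * e ^ (-γ) := by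
    calc (1 : ℝ) = (b - a) ^ γ * (b - a) ^ (-γ) := by
          rw [← Real.rpow_add hba, add_neg_cancel, Real.rpow_zero]
      _ ≤ _ := mul_le_mul_of_nonneg_left
          (Real.rpow_le_rpow_of_nonpos e0 e1 (by linarith)) (by positivity)
  nlinarith [pow_nonneg h0 4]

end Plane

/-- Quasi-optimal error estimate for piecewise quadratic interpolation against the
additive Cauchy kernel: for `u ∈ C⁶([a,b]×[c,d])` there is `C > 0` such that
for all mesh sizes and interior collocation indices,
`|∫∫ (u − u_Q)(x,y) ((x_{i/2} − x)² + (y_{j/2} − y)²)^{−γ/2} dx dy|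
  ≤ C (h_x⁴ η_{i/2}^{−γ} + h_y⁴ η̃_{j/2}^{−γ} + h_x^{5−γ} + h_y^{5−γ})`. -/
theorem stmt12 (γ a b c d : ℝ) (hγ0 : 0 < γ) (hγ1 : γ < 1) (hab : a < b) (hcd : c < d)
    (u : ℝ → ℝ → ℝ)
    (hu : ContDiffOn ℝ 6 (Function.uncurry u) (Set.Icc a b ×ˢ Set.Icc c d)) :
    ∃ C > 0, ∀ Mx My : ℕ, 1 ≤ Mx → 1 ≤ My →
      ∀ i j : ℕ, 1 ≤ i → i ≤ 2 * Mx - 1 → 1 ≤ j → j ≤ 2 * My - 1 →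
      ∀ hx hy xi yj ei ej : ℝ,
        hx = (b - a) / Mx → hy = (d - c) / My →
        xi = a + (i : ℝ) * hx / 2 → yj = c + (j : ℝ) * hy / 2 →
        ei = min (xi - a) (b - xi) → ej = min (yj - c) (d - yj) →
        |∫ y' in c..d, ∫ x' in a..b,
            (u x' y' - quadInterp a c hx hy Mx My u x' y') *
              ((xi - x') ^ 2 + (yj - y') ^ 2) ^ (-γ / 2)| ≤
          C * (hx ^ 4 * ei ^ (-γ) + hy ^ 4 * ej ^ (-γ)
              + hx ^ ((5 : ℝ) - γ) + hy ^ ((5 : ℝ) - γ)) := by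
  have hu4 : ContDiffOn ℝ 4 (Function.uncurry u) (Set.Icc a b ×ˢ Set.Icc c d) :=
    hu.of_le (by norm_num)
  have hswap : ContDiffOn ℝ 4 (fun z : ℝ × ℝ => u z.2 z.1) (Set.Icc c d ×ˢ Set.Icc a b) :=
    hu4.comp (f := Prod.swap) (contDiff_snd.prodMk contDiff_fst).contDiffOn
      fun z hz => ⟨hz.2, hz.1⟩
  obtain ⟨N, hN, h₁⟩ := exists_hasCubicApprox_fst hab hcd hu4
  obtain ⟨N', hN', h₂⟩ := exists_hasCubicApprox_fst hcd hab hswap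
  have hba : 0 < b - a := sub_pos.2 hab
  have hdc : 0 < d - c := sub_pos.2 hcd
  have hJ : ∀ L : ℝ, 0 ≤ ∫ s in Set.Ioc (-L) L, |s| ^ (-γ) := fun L =>
    integral_nonneg fun s => Real.rpow_nonneg (abs_nonneg s) _
  obtain ⟨C₁, hC₁⟩ : ∃ C, C = (4 * (b - a) + 2) * N *
    (∫ s in Set.Ioc (-(d - c)) (d - c), |s| ^ (-γ)) := ⟨_, rfl⟩
  obtain ⟨C₂, hC₂⟩ : ∃ C, C = (4 * (d - c) + 2) * (3 * N') *
    (∫ s in Set.Ioc (-(b - a)) (b - a), |s| ^ (-γ)) := ⟨_, rfl⟩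
  have hC₁0 : 0 ≤ C₁ := by rw [hC₁]; exact mul_nonneg (by positivity) (hJ _)
  have hC₂0 : 0 ≤ C₂ := by rw [hC₂]; exact mul_nonneg (by positivity) (hJ _)
  refine ⟨C₁ * (b - a) ^ γ + C₂ * (d - c) ^ γ + 1, by positivity, ?_⟩
  rintro Mx My hMx hMy i j hi hi' hj hj' hx hy xi yj ei ej hxd hyd rfl rfl hei hej
  have hMx0 : (0 : ℝ) < Mx := by exact_mod_cast hMx
  have hMy0 : (0 : ℝ) < My := by exact_mod_cast hMy
  have hx0 : 0 < hx := by rw [hxd]; exact div_pos hba hMx0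
  have hy0 : 0 < hy := by rw [hyd]; exact div_pos hdc hMy0
  have hp : a + (i : ℝ) * hx / 2 ∈ Set.Icc a b := by
    rw [hxd]; exact grid_mem_Icc hab.le hMx (by omega)
  have hq : c + (j : ℝ) * hy / 2 ∈ Set.Icc c d := by
    rw [hyd]; exact grid_mem_Icc hcd.le hMy (by omega)
  have main := abs_integral_sub_quadInterp_le hγ0 hγ1 hab hcd hu.continuousOn hN hN' h₁ h₂
    hMx hMy hp hq
  rw [← hxd, ← hyd] at main
  have ex := pow_le_rpow_mul_dist_endpoint hγ0 hab hx0.le hi hi'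
  have ey := pow_le_rpow_mul_dist_endpoint hγ0 hcd hy0.le hj hj'
  rw [← hxd, ← hei] at ex
  rw [← hyd, ← hej] at ey
  have hei0 : 0 ≤ ei := by
    rw [hei]; exact le_min (by linarith [hp.1]) (by linarith [hp.2])
  have hej0 : 0 ≤ ej := by
    rw [hej]; exact le_min (by linarith [hq.1]) (by linarith [hq.2])
  set X := hx ^ 4 * ei ^ (-γ) with hX
  set Y := hy ^ 4 * ej ^ (-γ) with hY
  have hX0 : 0 ≤ X := by positivity
  have hY0 : 0 ≤ Y := by positivity
  have hZ0 : 0 ≤ hx ^ ((5 : ℝ) - γ) := by positivity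
  have hW0 : 0 ≤ hy ^ ((5 : ℝ) - γ) := by positivity
  have hP : 0 ≤ C₁ * (b - a) ^ γ := by positivity
  have hQ : 0 ≤ C₂ * (d - c) ^ γ := by positivity
  calc _ ≤ C₁ * hx ^ 4 + C₂ * hy ^ 4 := main.trans (le_of_eq (by rw [hC₁, hC₂]; ring))
    _ ≤ C₁ * ((b - a) ^ γ * X) + C₂ * ((d - c) ^ γ * Y) := by gcongr
    _ ≤ (C₁ * (b - a) ^ γ + C₂ * (d - c) ^ γ + 1) * (X + Y) := by
        nlinarith [mul_nonneg hP hY0, mul_nonneg hQ hX0]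
    _ ≤ _ := mul_le_mul_of_nonneg_left (by linarith) (by positivity)
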